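/- arXiv:math/0507209 — 2 statements merged into one kernel-verified Lean document; each statement's English description precedes it below -/
import Mathlib

section
/- Let k be a commutative ring and F a commutative Frobenius algebra over k with form B. Define on F the operations x ⋆₁ y := 2*(x*y), x ⋆₀ y := x*y, and ⟨x, y⟩ := B(x, y). Then these operations satisfy the six identities defining a Virasoro algebroid: for all x, y, z in F, (1) (x ⋆₁ y) ⋆₁ z = x ⋆₁ (y ⋆₁ z) − y ⋆₁ (x ⋆₁ z) + 2*((x ⋆₀ z) ⋆₁ y); (2) x ⋆₀ y = −(y ⋆₀ x) + y ⋆₁ x; (3) (x ⋆₀ y) ⋆₀ z = −(x ⋆₀ (y ⋆₁ z)) − ((x ⋆₀ z) ⋆₀ y) + 2*((x ⋆₀ z) ⋆₁ y); (4) (x ⋆₀ y) ⋆₁ z = (x ⋆₀ z) ⋆₁ y; (5) ⟨x ⋆₀ y, z⟩ = ⟨x ⋆₀ z, y⟩; (6) ⟨x ⋆₁ y, z⟩ = 4*⟨x ⋆₀ z, y⟩ − ⟨y, x ⋆₁ z⟩. -/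
/-- A commutative Frobenius algebra yields a Virasoro algebroid: with
`x ⋆₁ y = 2*(x*y)`, `x ⋆₀ y = x*y`, `⟨x,y⟩ = B x y`, the six axioms hold. -/
theorem frobenius_virasoro_algebroid (k : Type*) [CommRing k] (F : Type*) [CommRing F]
    [Algebra k F] (B : F →ₗ[k] F →ₗ[k] k)
    (hsymm : ∀ x y : F, B x y = B y x)
    (hfrob : ∀ x y z : F, B (x * y) z = B x (y * z))
    (s₁ s₀ : F → F → F)
    (hs₁ : ∀ x y : F, s₁ x y = 2 * (x * y))
    (hs₀ : ∀ x y : F, s₀ x y = x * y) :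
    ∀ x y z : F,
      (s₁ (s₁ x y) z = s₁ x (s₁ y z) - s₁ y (s₁ x z) + 2 * s₁ (s₀ x z) y) ∧
      (s₀ x y = -(s₀ y x) + s₁ y x) ∧
      (s₀ (s₀ x y) z = -(s₀ x (s₁ y z)) - s₀ (s₀ x z) y + 2 * s₁ (s₀ x z) y) ∧
      (s₁ (s₀ x y) z = s₁ (s₀ x z) y) ∧
      (B (s₀ x y) z = B (s₀ x z) y) ∧
      (B (s₁ x y) z = 4 * B (s₀ x z) y - B y (s₁ x z)) := by
  intro x y z
  have key : B (x * y) z = B (x * z) y := by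
    rw [hfrob, hfrob, mul_comm y z]
  have h2 : B y (x * z) = B (x * z) y := hsymm _ _
  simp only [hs₁, hs₀]
  refine ⟨by ring, by ring, by ring, by ring, key, ?_⟩
  simp only [two_mul, map_add, LinearMap.add_apply, key, h2]
  ring
end

section
/- Let k be a commutative ring, V a k-module, m₁ : V × V → V a symmetric k-bilinear operation and m₀ : V × V → V a k-bilinear operation, satisfying for all x, y, z in V the identities m₁(m₁(x,y), z) = m₁(x, m₁(y,z)) − m₁(y, m₁(x,z)) + 2*m₁(m₀(x,z), y) and m₁(m₀(x,y), z) = m₁(m₀(x,z), y). Then for all x, y, z in V the cyclic sums satisfy 2*( m₁(x, m₀(y,z)) + m₁(y, m₀(z,x)) + m₁(z, m₀(x,y)) ) = m₁(x, m₁(y,z)) + m₁(y, m₁(z,x)) + m₁(z, m₁(x,y)). -/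
/-- From axioms (1) and (4) of a Virasoro algebroid, the cyclic sums satisfy
`2 • Cycle (m₁ x (m₀ y z)) = Cycle (m₁ x (m₁ y z))`. -/
theorem virasoro_cyclic_ops (k : Type*) [CommRing k] (V : Type*) [AddCommGroup V]
    [Module k V]
    (m₁ m₀ : V →ₗ[k] V →ₗ[k] V)
    (hm₁symm : ∀ x y : V, m₁ x y = m₁ y x)
    (h1 : ∀ x y z : V,
      m₁ (m₁ x y) z = m₁ x (m₁ y z) - m₁ y (m₁ x z) + 2 • m₁ (m₀ x z) y)
    (h4 : ∀ x y z : V, m₁ (m₀ x y) z = m₁ (m₀ x z) y) :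
    ∀ x y z : V,
      2 • (m₁ x (m₀ y z) + m₁ y (m₀ z x) + m₁ z (m₀ x y)) =
        m₁ x (m₁ y z) + m₁ y (m₁ z x) + m₁ z (m₁ x y) := by
  intro x y z
  have e1 := h1 x y z
  have e2 := h1 y z x
  have e3 := h1 z x y
  rw [hm₁symm (m₁ x y) z, hm₁symm x z, h4 x z y] at e1
  rw [hm₁symm (m₁ y z) x, hm₁symm y x, h4 y x z, hm₁symm x y] at e2
  rw [hm₁symm (m₁ z x) y, hm₁symm z y, h4 z y x, hm₁symm y z] at e3
  rw [hm₁symm x (m₀ y z), hm₁symm y (m₀ z x), hm₁symm z (m₀ x y)]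
  simp only [hm₁symm z y, hm₁symm x z, hm₁symm y x, two_nsmul] at e1 e2 e3 ⊢
  grind
end
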